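/- Let k ≥ 1 be an integer, let m and q be positive integers with q ≥ 2, and let X > 1. Then Σ_{ℓ ≥ 1} e^{−mℓq/X} (log(m + ℓq))^k / (m + ℓq) ≤ (C_k/q) · ( (log m)^k + (log X)^k + (log(m + X/m))^{k+1} ), where C_k > 0 depends only on k. -/

import Mathlib

/-!
Put `Y = X / m`, so that the summand is `e^{-t/Y} log(m + t)^k / (m + t)` at `t = ℓq`. By
Bernoulli's inequality `log (m + t) ≤ (1 + t/Y) log (m + Y)`, and half of the exponential absorbs
the power of `1 + t/Y`, so the summand is at most a constant times
`log(m + Y)^k · e^{-t/(2Y)} / (m + t)`.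

What remains is a Riemann sum of a shifted exponential integral. The classical bound
`e^x E₁(x) ≤ log (1 + 1/x)` has a discrete version: if `φ(t) = e^{-t/Y} / (m + t)`, then
`q φ(t + q)` is at most the decrease of `log (1 + Y φ)` from `t` to `t + q`, and the sum telescopes
to `log (1 + Y/m)`. With `2Y` in place of `Y` this is at most `2 log (m + Y)`.
-/

open Real Finset
open scoped Nat

/-- The integrand `t ↦ e^{-t/Y} / (m + t)` of the exponential integral with decay scale `Y`,
shifted by `m`. Up to a factor independent of `t`, it majorizes the summands of the theorem. -/
noncomputable def expDivAdd (Y m t : ℝ) : ℝ :=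
  exp (-(t / Y)) / (m + t)

section ExponentialIntegral

variable {Y m t q : ℝ}

lemma expDivAdd_nonneg (hm : 0 ≤ m) (ht : 0 ≤ t) : 0 ≤ expDivAdd Y m t :=
  div_nonneg (exp_pos _).le (add_nonneg hm ht)

lemma one_add_div_mul_expDivAdd_add_le (hY : 0 < Y) (hm : 0 < m) (ht : 0 ≤ t) (hq : 0 ≤ q) :
    (1 + q / Y) * expDivAdd Y m (t + q) ≤
      expDivAdd Y m t * (1 - q * expDivAdd Y m (t + q)) := by
  have hdecay : expDivAdd Y m (t + q) ≤ 1 / (m + (t + q)) := by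
    unfold expDivAdd
    gcongr
    exact exp_le_one_iff.2 (neg_nonpos.2 (by positivity))
  have hremain : (m + t) / (m + (t + q)) ≤ 1 - q * expDivAdd Y m (t + q) :=
    calc (m + t) / (m + (t + q)) = 1 - q * (1 / (m + (t + q))) := by
          field_simp
          ring
      _ ≤ 1 - q * expDivAdd Y m (t + q) := by gcongr
  calc (1 + q / Y) * expDivAdd Y m (t + q)
      ≤ exp (q / Y) * expDivAdd Y m (t + q) := by
        gcongr
        · exact expDivAdd_nonneg hm.le (by positivity)
        · linarith [add_one_le_exp (q / Y)]
    _ = exp (-(t / Y)) / (m + (t + q)) := by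
        rw [expDivAdd, ← mul_div_assoc, ← exp_add]
        ring_nf
    _ = expDivAdd Y m t * ((m + t) / (m + (t + q))) := by
        rw [expDivAdd]
        field_simp
    _ ≤ expDivAdd Y m t * (1 - q * expDivAdd Y m (t + q)) := by
        gcongr
        exact expDivAdd_nonneg hm.le ht

lemma mul_expDivAdd_add_le_log_sub_log (hY : 0 < Y) (hm : 0 < m) (ht : 0 ≤ t) (hq : 0 ≤ q) :
    q * expDivAdd Y m (t + q) ≤
      log (1 + Y * expDivAdd Y m t) - log (1 + Y * expDivAdd Y m (t + q)) := by
  have hstep := one_add_div_mul_expDivAdd_add_le hY hm ht hq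
  have hleft : 0 ≤ expDivAdd Y m t := expDivAdd_nonneg hm.le ht
  have hright : 0 ≤ expDivAdd Y m (t + q) := expDivAdd_nonneg hm.le (by positivity)
  set a := expDivAdd Y m t
  set b := expDivAdd Y m (t + q)
  have hexp : 1 + Y * b ≤ (1 + Y * a) * exp (-(q * b)) :=
    calc 1 + Y * b = 1 - q * b + Y * ((1 + q / Y) * b) := by
          field_simp
          ring
      _ ≤ 1 - q * b + Y * (a * (1 - q * b)) := by gcongr
      _ = (1 + Y * a) * (1 - q * b) := by ring
      _ ≤ (1 + Y * a) * exp (-(q * b)) := by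
          gcongr
          exact one_sub_le_exp_neg _
  have hlog := log_le_log (by positivity) hexp
  rw [log_mul (by positivity) (exp_ne_zero _), log_exp] at hlog
  linarith

lemma mul_sum_range_expDivAdd_le_log (hY : 0 < Y) (hm : 0 < m) (hq : 0 ≤ q) (n : ℕ) :
    q * ∑ i ∈ range n, expDivAdd Y m ((i + 1) * q) ≤ log (1 + Y / m) := by
  let potential (i : ℕ) : ℝ := log (1 + Y * expDivAdd Y m (i * q))
  have hterm (i : ℕ) : q * expDivAdd Y m ((i + 1) * q) ≤ potential i - potential (i + 1) := by
    have h := mul_expDivAdd_add_le_log_sub_log hY hm (t := i * q) (by positivity) hq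
    simpa only [potential, Nat.cast_succ, add_one_mul] using h
  have hlast : 0 ≤ potential n :=
    log_nonneg (le_add_of_nonneg_right
      (mul_nonneg hY.le (expDivAdd_nonneg hm.le (by positivity))))
  calc q * ∑ i ∈ range n, expDivAdd Y m ((i + 1) * q)
      ≤ ∑ i ∈ range n, (potential i - potential (i + 1)) := by
        rw [mul_sum]
        exact sum_le_sum fun i _ => hterm i
    _ = potential 0 - potential n := sum_range_sub' potential n
    _ ≤ potential 0 := sub_le_self _ hlast
    _ = log (1 + Y / m) := by simp [potential, expDivAdd, div_eq_mul_inv]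

end ExponentialIntegral

lemma one_add_pow_mul_exp_neg_le (k : ℕ) {u : ℝ} (hu : -1 ≤ u) :
    (1 + u) ^ k * exp (-u) ≤ 2 ^ k * k ! * exp (1 / 2) * exp (-(u / 2)) := by
  have hpow : ((1 + u) / 2) ^ k ≤ k ! * exp ((1 + u) / 2) :=
    (div_le_iff₀' (by positivity)).1 (pow_div_factorial_le_exp _ (by linarith) k)
  calc (1 + u) ^ k * exp (-u) = 2 ^ k * ((1 + u) / 2) ^ k * exp (-u) := by
        rw [← mul_pow, mul_div_cancel₀ _ two_ne_zero]
    _ ≤ 2 ^ k * (k ! * exp ((1 + u) / 2)) * exp (-u) := by gcongr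
    _ = 2 ^ k * k ! * (exp ((1 + u) / 2) * exp (-u)) := by ring
    _ = 2 ^ k * k ! * exp (1 / 2) * exp (-(u / 2)) := by
        rw [mul_assoc _ (exp (1 / 2)), ← exp_add, ← exp_add]
        ring_nf

section LogPow

variable {m Y t : ℝ}

lemma log_add_le_one_add_div_mul_log_add (hm : 1 ≤ m) (hY : 0 < Y) (ht : 0 ≤ t) :
    log (m + t) ≤ (1 + t / Y) * log (m + Y) := by
  have hbernoulli : 1 + (1 + t / Y) * (m + Y - 1) ≤ (m + Y) ^ (1 + t / Y) := by
    simpa only [add_sub_cancel] using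
      one_add_mul_self_le_rpow_one_add (s := m + Y - 1) (by linarith)
        (le_add_of_nonneg_right (by positivity : 0 ≤ t / Y))
  have hle : m + t ≤ (m + Y) ^ (1 + t / Y) := by
    have hexpand : 1 + (1 + t / Y) * (m + Y - 1) = m + t + (Y + t / Y * (m - 1)) := by
      field_simp
      ring
    have : 0 ≤ t / Y * (m - 1) := mul_nonneg (by positivity) (sub_nonneg.2 hm)
    linarith
  calc log (m + t) ≤ log ((m + Y) ^ (1 + t / Y)) := log_le_log (by linarith) hle
    _ = (1 + t / Y) * log (m + Y) := log_rpow (by linarith) _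

lemma log_one_add_two_mul_div_le (hm : 1 ≤ m) (hY : 0 ≤ Y) :
    log (1 + 2 * Y / m) ≤ 2 * log (m + Y) := by
  have hdiv : Y / m ≤ Y := div_le_self hY hm
  have hdiv_nonneg : 0 ≤ Y / m := by positivity
  have hsq : 1 + 2 * Y / m ≤ (m + Y) ^ 2 :=
    calc 1 + 2 * Y / m = 1 + 2 * (Y / m) := by rw [mul_div_assoc]
      _ ≤ (1 + Y / m) ^ 2 := one_add_mul_le_pow (by linarith) 2
      _ ≤ (m + Y) ^ 2 := by gcongr
  calc log (1 + 2 * Y / m) ≤ log ((m + Y) ^ 2) := log_le_log (by positivity) hsq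
    _ = 2 * log (m + Y) := by simp [log_pow]

lemma exp_mul_log_pow_div_le_expDivAdd (k : ℕ) (hm : 1 ≤ m) (hY : 0 < Y) (ht : 0 ≤ t) :
    exp (-(t / Y)) * log (m + t) ^ k / (m + t) ≤
      2 ^ k * k ! * exp (1 / 2) * log (m + Y) ^ k * expDivAdd (2 * Y) m t := by
  have hlog : 0 ≤ log (m + t) := log_nonneg (by linarith)
  have hL : 0 ≤ log (m + Y) := log_nonneg (by linarith)
  have hu : 0 ≤ t / Y := by positivity
  calc exp (-(t / Y)) * log (m + t) ^ k / (m + t)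
      ≤ exp (-(t / Y)) * ((1 + t / Y) * log (m + Y)) ^ k / (m + t) := by
        gcongr
        exact log_add_le_one_add_div_mul_log_add hm hY ht
    _ = (1 + t / Y) ^ k * exp (-(t / Y)) * log (m + Y) ^ k / (m + t) := by
        rw [mul_pow]
        ring
    _ ≤ 2 ^ k * k ! * exp (1 / 2) * exp (-(t / Y / 2)) * log (m + Y) ^ k / (m + t) := by
        gcongr ?_ * _ / _
        exact one_add_pow_mul_exp_neg_le k (by linarith)
    _ = 2 ^ k * k ! * exp (1 / 2) * log (m + Y) ^ k * expDivAdd (2 * Y) m t := by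
        rw [expDivAdd, div_div, mul_comm Y]
        ring

lemma sum_range_exp_mul_log_pow_div_le (k : ℕ) {q : ℝ} (hm : 1 ≤ m) (hY : 0 < Y) (hq : 0 < q)
    (n : ℕ) :
    ∑ i ∈ range n, exp (-((i + 1) * q / Y)) * log (m + (i + 1) * q) ^ k / (m + (i + 1) * q) ≤
      2 ^ (k + 1) * k ! * exp (1 / 2) / q * log (m + Y) ^ (k + 1) := by
  have hL : 0 ≤ log (m + Y) := log_nonneg (by linarith)
  have hsum : ∑ i ∈ range n, expDivAdd (2 * Y) m ((i + 1) * q) ≤ 2 * log (m + Y) / q := by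
    rw [le_div_iff₀' hq]
    exact (mul_sum_range_expDivAdd_le_log (by positivity) (by linarith) hq.le n).trans
      (log_one_add_two_mul_div_le hm hY.le)
  calc ∑ i ∈ range n, exp (-((i + 1) * q / Y)) * log (m + (i + 1) * q) ^ k / (m + (i + 1) * q)
      ≤ ∑ i ∈ range n, 2 ^ k * k ! * exp (1 / 2) * log (m + Y) ^ k *
          expDivAdd (2 * Y) m ((i + 1) * q) :=
        sum_le_sum fun i _ => exp_mul_log_pow_div_le_expDivAdd k hm hY (by positivity)
    _ ≤ 2 ^ k * k ! * exp (1 / 2) * log (m + Y) ^ k * (2 * log (m + Y) / q) := by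
        rw [← mul_sum]
        gcongr
    _ = 2 ^ (k + 1) * k ! * exp (1 / 2) / q * log (m + Y) ^ (k + 1) := by ring

end LogPow

theorem stmt_14_general (k : ℕ) :
    ∃ C : ℝ, 0 < C ∧ ∀ m q X : ℝ, 1 ≤ m → 0 < q → 0 < X →
      (Summable fun ℓ : ℕ =>
        exp (-(m * (ℓ + 1) * q) / X) * log (m + (ℓ + 1) * q) ^ k / (m + (ℓ + 1) * q)) ∧
      ∑' ℓ : ℕ, exp (-(m * (ℓ + 1) * q) / X) * log (m + (ℓ + 1) * q) ^ k / (m + (ℓ + 1) * q) ≤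
        C / q * log (m + X / m) ^ (k + 1) := by
  refine ⟨2 ^ (k + 1) * k ! * exp (1 / 2), by positivity, fun m q X hm hq hX => ?_⟩
  have hscale (ℓ : ℕ) : -(m * (ℓ + 1) * q) / X = -((ℓ + 1) * q / (X / m)) := by
    field_simp
  simp only [hscale]
  have hnonneg (ℓ : ℕ) : 0 ≤ exp (-((ℓ + 1) * q / (X / m))) * log (m + (ℓ + 1) * q) ^ k /
      (m + (ℓ + 1) * q) := by
    have : 0 ≤ log (m + (ℓ + 1) * q) := log_nonneg (le_add_of_le_of_nonneg hm (by positivity))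
    positivity
  have hpartial := sum_range_exp_mul_log_pow_div_le k hm (by positivity : 0 < X / m) hq
  exact ⟨summable_of_sum_range_le hnonneg hpartial, tsum_le_of_sum_range_le hnonneg hpartial⟩

/-- For every integer `k ≥ 1` there is a constant `C_k > 0`, depending only on `k`, such that
for all positive integers `m`, all integers `q ≥ 2` and all `X > 1`,
`Σ_{ℓ ≥ 1} e^{−mℓq/X} (log(m + ℓq))^k / (m + ℓq)
  ≤ (C_k/q) ((log m)^k + (log X)^k + (log(m + X/m))^{k+1})`. -/
theorem stmt_14 (k : ℕ) (hk : 0 < k) :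
    ∃ C : ℝ, 0 < C ∧ ∀ m q : ℕ, 0 < m → 2 ≤ q → ∀ X : ℝ, 1 < X →
      (∑' ℓ : ℕ, Real.exp (-((m : ℝ) * ((ℓ : ℝ) + 1) * q) / X) *
          (Real.log ((m : ℝ) + ((ℓ : ℝ) + 1) * q)) ^ k / ((m : ℝ) + ((ℓ : ℝ) + 1) * q))
        ≤ (C / q) * ((Real.log m) ^ k + (Real.log X) ^ k +
            (Real.log ((m : ℝ) + X / m)) ^ (k + 1)) := by
  obtain ⟨C, hC, hbound⟩ := stmt_14_general k
  refine ⟨C, hC, fun m q hm hq X hX =>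
    (hbound m q X (mod_cast hm) (by positivity) (by linarith)).2.trans ?_⟩
  have hlogm : 0 ≤ log (m : ℝ) ^ k := pow_nonneg (log_natCast_nonneg m) k
  have hlogX : 0 ≤ log X ^ k := pow_nonneg (log_nonneg hX.le) k
  gcongr
  linarith
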